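/- Let K > 0 and N > 1, set κ := K/(N−1), c := ∫₀^{π/√κ} sin_κ(r)^{N−1} dr, and define f : [0, π/√κ] → ℝ by f(t) := c^{−1}·∫₀^t sin_κ(r)^{N−1} dr. Then f is a continuous strictly increasing bijection from [0, π/√κ] onto [0,1]; moreover the function h := f' ∘ f^{−1} : [0,1] → [0,∞), where f'(t) = c^{−1}·sin_κ(t)^{N−1}, is differentiable on (0,1) with h'(v) = (N−1)·cos_κ(f^{−1}(v)) / sin_κ(f^{−1}(v)), and h' is nonincreasing on (0,1). -/

import Mathlib

open Real Set Filter MeasureTheory Topology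

/-- Generalized sine: the solution of `v'' + κ v = 0`, `v 0 = 0`, `v' 0 = 1`. -/
noncomputable def sinK (κ r : ℝ) : ℝ :=
  if 0 < κ then Real.sin (Real.sqrt κ * r) / Real.sqrt κ
  else if κ = 0 then r
  else Real.sinh (Real.sqrt (-κ) * r) / Real.sqrt (-κ)

/-- Generalized cosine: the solution of `v'' + κ v = 0`, `v 0 = 1`, `v' 0 = 0`. -/
noncomputable def cosK (κ r : ℝ) : ℝ :=
  if 0 < κ then Real.cos (Real.sqrt κ * r)
  else if κ = 0 then 1
  else Real.cosh (Real.sqrt (-κ) * r)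

/-- Distortion coefficient `σ_κ^{(t)}(θ)` (for `θ < π_κ`; `σ_κ^{(t)}(0) = t`). -/
noncomputable def sigmaCoeff (κ t θ : ℝ) : ℝ :=
  if θ = 0 then t else sinK κ (t * θ) / sinK κ θ

/-- `u` is `σ_κ`-concave on `I ⊆ ℝ`.  The requirement `θ := |r₁ - r₀| < π_κ`
(encoded by `κ ≤ 0 ∨ |r₁ - r₀| < π/√κ`) expresses that the inequality with the
value `σ_κ^{(t)}(θ) = ∞` for `θ ≥ π_κ` cannot hold for a positive function. -/
def IsSigmaConcaveOn (κ : ℝ) (I : Set ℝ) (u : ℝ → ℝ) : Prop :=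
  ∀ r₀ ∈ I, ∀ r₁ ∈ I,
    (r₀ ≠ r₁ → (κ ≤ 0 ∨ |r₁ - r₀| < Real.pi / Real.sqrt κ)) ∧
    ∀ t ∈ Set.Icc (0:ℝ) 1,
      sigmaCoeff κ (1 - t) |r₁ - r₀| * u r₀ + sigmaCoeff κ t |r₁ - r₀| * u r₁
        ≤ u ((1 - t) * r₀ + t * r₁)

/-- Right derivative `d⁺u(r) = L`, i.e. `(u (r+h) - u r)/h → L` as `h ↓ 0`. -/
def HasRightDerivAt (u : ℝ → ℝ) (r L : ℝ) : Prop :=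
  Filter.Tendsto (fun h : ℝ => (u (r + h) - u r) / h) (nhdsWithin 0 (Set.Ioi 0)) (nhds L)

/-- Left derivative `d⁻u(r) = L`, i.e. `(u (r-h) - u r)/(-h) → L` as `h ↓ 0`. -/
def HasLeftDerivAt (u : ℝ → ℝ) (r L : ℝ) : Prop :=
  Filter.Tendsto (fun h : ℝ => (u (r - h) - u r) / (-h)) (nhdsWithin 0 (Set.Ioi 0)) (nhds L)

/-- The Jacobian function `J_{H,K,N}(r) = (cos_{K/(N-1)}(r) + H/(N-1) sin_{K/(N-1)}(r))₊^{N-1}`. -/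
noncomputable def Jac (H K N r : ℝ) : ℝ :=
  (max (cosK (K/(N-1)) r + (H/(N-1)) * sinK (K/(N-1)) r) 0) ^ (N-1)

/-!
Differentiating `f (g v) = v` gives `g' = 1 / (f' ∘ g)`, so the profile `h = f' ∘ g` has derivative
`(f'' / f') ∘ g`, the logarithmic derivative of the density evaluated at `g`. For the density
`sin_κ ^ (N - 1)` it is `(N - 1) cos_κ / sin_κ`, and the generalized cotangent decreases because
`cos_κ a / sin_κ a - cos_κ b / sin_κ b = sin_κ (b - a) / (sin_κ a * sin_κ b)`.
-/

section GeneralizedTrigonometry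

variable {κ r a b : ℝ}

theorem sinK_of_pos (hκ : 0 < κ) (r : ℝ) : sinK κ r = sin (√κ * r) / √κ := if_pos hκ

theorem sinK_of_neg (hκ : κ < 0) (r : ℝ) : sinK κ r = sinh (√(-κ) * r) / √(-κ) := by
  simp only [sinK, hκ.not_gt, hκ.ne, if_false]

theorem sinK_zero_left (r : ℝ) : sinK 0 r = r := by
  simp only [sinK, lt_irrefl, if_false, if_true]

theorem cosK_of_pos (hκ : 0 < κ) (r : ℝ) : cosK κ r = cos (√κ * r) := if_pos hκ

theorem cosK_of_neg (hκ : κ < 0) (r : ℝ) : cosK κ r = cosh (√(-κ) * r) := by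
  simp only [cosK, hκ.not_gt, hκ.ne, if_false]

theorem cosK_zero_left (r : ℝ) : cosK 0 r = 1 := by
  simp only [cosK, lt_irrefl, if_false, if_true]

theorem hasDerivAt_sinK (κ r : ℝ) : HasDerivAt (sinK κ) (cosK κ r) r := by
  have hlin (ω : ℝ) : HasDerivAt (fun x ↦ ω * x) ω r := by
    simpa using (hasDerivAt_id r).const_mul ω
  rcases lt_trichotomy κ 0 with hκ | rfl | hκ
  · rw [funext (sinK_of_neg hκ), cosK_of_neg hκ]
    have hω : √(-κ) ≠ 0 := (sqrt_pos.2 (neg_pos.2 hκ)).ne'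
    exact ((hlin _).sinh.div_const _).congr_deriv (mul_div_cancel_right₀ _ hω)
  · rw [funext sinK_zero_left, cosK_zero_left]
    exact hasDerivAt_id' r
  · rw [funext (sinK_of_pos hκ), cosK_of_pos hκ]
    have hω : √κ ≠ 0 := (sqrt_pos.2 hκ).ne'
    exact ((hlin _).sin.div_const _).congr_deriv (mul_div_cancel_right₀ _ hω)

theorem continuous_sinK (κ : ℝ) : Continuous (sinK κ) :=
  continuous_iff_continuousAt.2 fun r ↦ (hasDerivAt_sinK κ r).continuousAt

theorem sinK_sub (κ a b : ℝ) :
    sinK κ (a - b) = sinK κ a * cosK κ b - cosK κ a * sinK κ b := by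
  rcases lt_trichotomy κ 0 with hκ | rfl | hκ
  · simp only [sinK_of_neg hκ, cosK_of_neg hκ, mul_sub, sinh_sub]
    ring
  · simp only [sinK_zero_left, cosK_zero_left]
    ring
  · simp only [sinK_of_pos hκ, cosK_of_pos hκ, mul_sub, sin_sub]
    ring

theorem sinK_pos (hr : 0 < r) (hr' : κ ≤ 0 ∨ r < π / √κ) : 0 < sinK κ r := by
  rcases lt_trichotomy κ 0 with hκ | rfl | hκ
  · have hω : 0 < √(-κ) := sqrt_pos.2 (neg_pos.2 hκ)
    rw [sinK_of_neg hκ]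
    exact div_pos (sinh_pos_iff.2 (mul_pos hω hr)) hω
  · rwa [sinK_zero_left]
  · have hω : 0 < √κ := sqrt_pos.2 hκ
    have hlt : √κ * r < π := (lt_div_iff₀' hω).1 (hr'.resolve_left hκ.not_ge)
    rw [sinK_of_pos hκ]
    exact div_pos (sin_pos_of_pos_of_lt_pi (mul_pos hω hr) hlt) hω

theorem cosK_div_sinK_lt (ha : 0 < a) (hab : a < b) (hb : κ ≤ 0 ∨ b < π / √κ) :
    cosK κ b / sinK κ b < cosK κ a / sinK κ a := by
  have hsa : 0 < sinK κ a := sinK_pos ha (hb.imp_right hab.trans)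
  have hsb : 0 < sinK κ b := sinK_pos (ha.trans hab) hb
  have hsub : 0 < sinK κ (b - a) :=
    sinK_pos (sub_pos.2 hab) (hb.imp_right (sub_lt_self b ha).trans)
  rw [div_lt_div_iff₀ hsb hsa]
  linarith [sinK_sub κ b a]

theorem antitoneOn_mul_cosK_div_sinK (κ : ℝ) {p : ℝ} (hp : 0 ≤ p) :
    AntitoneOn (fun r ↦ p * cosK κ r / sinK κ r) (Ioo 0 (π / √κ)) := by
  have hcot : StrictAntiOn (fun r ↦ cosK κ r / sinK κ r) (Ioo 0 (π / √κ)) :=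
    fun _ ha _ hb hab ↦ cosK_div_sinK_lt ha.1 hab (.inr hb.2)
  intro a ha b hb hab
  simp only [mul_div_assoc]
  exact mul_le_mul_of_nonneg_left (hcot.antitoneOn ha hb hab) hp

theorem continuous_sinK_rpow (κ : ℝ) {p : ℝ} (hp : 0 ≤ p) : Continuous fun r ↦ sinK κ r ^ p :=
  (continuous_sinK κ).rpow_const fun _ ↦ .inr hp

theorem hasDerivAt_sinK_rpow (p : ℝ) (hr : sinK κ r ≠ 0) :
    HasDerivAt (fun x ↦ sinK κ x ^ p) (cosK κ r * p * sinK κ r ^ (p - 1)) r :=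
  (hasDerivAt_sinK κ r).rpow_const (.inl hr)

theorem logDeriv_sinK_rpow (p : ℝ) (hr : 0 < sinK κ r) :
    logDeriv (fun x ↦ sinK κ x ^ p) r = p * cosK κ r / sinK κ r := by
  have hpow : sinK κ r ^ p ≠ 0 := (rpow_pos_of_pos hr p).ne'
  rw [logDeriv_apply, (hasDerivAt_sinK_rpow p hr.ne').deriv, rpow_sub_one hr.ne']
  field_simp

end GeneralizedTrigonometry

section RightInverse

variable {α β : Type*} {f : α → β} {g : β → α}

theorem strictMonoOn_of_rightInvOn [LinearOrder α] [Preorder β] {s : Set α} {t : Set β}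
    (hf : MonotoneOn f s) (hg : MapsTo g t s) (hfg : RightInvOn g f t) : StrictMonoOn g t := by
  intro v hv w hw hvw
  by_contra! hle
  exact hvw.not_ge (by simpa only [hfg hv, hfg hw] using hf (hg hw) (hg hv) hle)

theorem mapsTo_Ioo_of_strictMonoOn [Preorder α] [Preorder β] {a b : α} {c d : β}
    (hg : StrictMonoOn g (Icc c d)) (hmaps : MapsTo g (Icc c d) (Icc a b)) :
    MapsTo g (Ioo c d) (Ioo a b) := by
  intro v hv
  have hcd : c ≤ d := (hv.1.trans hv.2).le
  exact Ioo_subset_Ioo (hmaps (left_mem_Icc.2 hcd)).1 (hmaps (right_mem_Icc.2 hcd)).2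
    (hg.mapsTo_Ioo hv)

theorem continuousAt_of_rightInvOn [LinearOrder α] [TopologicalSpace α] [OrderTopology α]
    [DenselyOrdered α] [LinearOrder β] [TopologicalSpace β] [OrderTopology β]
    {s : Set α} {t : Set β} {v : β}
    (hf : StrictMonoOn f s) (hfst : MapsTo f s t) (hg : MapsTo g t s) (hfg : RightInvOn g f t)
    (ht : t ∈ 𝓝 v) (hs : s ∈ 𝓝 (g v)) : ContinuousAt g v := by
  have hgf : LeftInvOn g f s := hf.injOn.rightInvOn_of_leftInvOn hfg hfst hg
  have hsurj : s ⊆ g '' t := hgf.surjOn hfst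
  exact (strictMonoOn_of_rightInvOn hf.monotoneOn hg hfg).continuousAt_of_image_mem_nhds ht
    (mem_of_superset hs hsurj)

theorem hasDerivAt_deriv_comp_rightInverse {𝕜 : Type*} [NontriviallyNormedField 𝕜]
    {f f' g : 𝕜 → 𝕜} {v : 𝕜} (hg : ContinuousAt g v) (hf : HasDerivAt f (f' (g v)) (g v))
    (hf' : DifferentiableAt 𝕜 f' (g v)) (hne : f' (g v) ≠ 0)
    (hfg : ∀ᶠ w in 𝓝 v, f (g w) = w) :
    HasDerivAt (fun w ↦ f' (g w)) (logDeriv f' (g v)) v :=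
  (hf'.hasDerivAt.comp v (hf.of_local_left_inverse hg hne hfg)).congr_deriv
    (div_eq_mul_inv _ _).symm

end RightInverse

/-- The primitive of the density `w` vanishing at `a`, scaled to take the value `1` at `b`: the
cumulative distribution function of the probability measure on `[a, b]` with density proportional
to `w`. It is not truncated outside `[a, b]`. -/
noncomputable def normalizedPrimitive (w : ℝ → ℝ) (a b t : ℝ) : ℝ :=
  (∫ r in a..b, w r)⁻¹ * ∫ r in a..t, w r

namespace normalizedPrimitive

variable {w g : ℝ → ℝ} {a b t v : ℝ}

theorem apply_left (w : ℝ → ℝ) (a b : ℝ) : normalizedPrimitive w a b a = 0 := by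
  simp only [normalizedPrimitive, intervalIntegral.integral_same, mul_zero]

theorem apply_right (hw : ∫ r in a..b, w r ≠ 0) : normalizedPrimitive w a b b = 1 :=
  inv_mul_cancel₀ hw

protected theorem continuousOn (hw : IntervalIntegrable w volume a b) :
    ContinuousOn (normalizedPrimitive w a b) (uIcc a b) :=
  (intervalIntegral.continuousOn_primitive_interval' hw left_mem_uIcc).const_mul _

protected theorem hasDerivAt (hw : IntervalIntegrable w volume a b)
    (hcont : ContinuousOn w (Ioo a b)) (ht : t ∈ Ioo a b) :
    HasDerivAt (normalizedPrimitive w a b) ((∫ r in a..b, w r)⁻¹ * w t) t := by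
  have hat : IntervalIntegrable w volume a t := hw.mono_set <|
    uIcc_subset_uIcc_left (Icc_subset_uIcc (Ioo_subset_Icc_self ht))
  exact (intervalIntegral.integral_hasDerivAt_right hat
    (hcont.stronglyMeasurableAtFilter isOpen_Ioo t ht)
    (hcont.continuousAt (Ioo_mem_nhds ht.1 ht.2))).const_mul _

protected theorem strictMonoOn (hw : IntervalIntegrable w volume a b)
    (hpos : ∀ r ∈ Ioo a b, 0 < w r) : StrictMonoOn (normalizedPrimitive w a b) (Icc a b) := by
  intro x hx y hy hxy
  have hint {s t : ℝ} (hs : s ∈ Icc a b) (ht : t ∈ Icc a b) : IntervalIntegrable w volume s t :=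
    hw.mono_set (uIcc_subset_uIcc (Icc_subset_uIcc hs) (Icc_subset_uIcc ht))
  have hab : a < b := hx.1.trans_lt (hxy.trans_le hy.2)
  have ha : a ∈ Icc a b := left_mem_Icc.2 hab.le
  have htotal : 0 < ∫ r in a..b, w r :=
    intervalIntegral.intervalIntegral_pos_of_pos_on hw hpos hab
  have hincrement : 0 < ∫ r in x..y, w r :=
    intervalIntegral.intervalIntegral_pos_of_pos_on (hint hx hy)
      (fun r hr ↦ hpos r (Ioo_subset_Ioo hx.1 hy.2 hr)) hxy
  refine mul_lt_mul_of_pos_left ?_ (inv_pos.2 htotal)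
  rwa [← sub_pos, intervalIntegral.integral_interval_sub_left (hint ha hy) (hint ha hx)]

theorem image_Icc (hw : IntervalIntegrable w volume a b) (hpos : ∀ r ∈ Ioo a b, 0 < w r)
    (hab : a < b) : normalizedPrimitive w a b '' Icc a b = Icc 0 1 := by
  have htotal : 0 < ∫ r in a..b, w r :=
    intervalIntegral.intervalIntegral_pos_of_pos_on hw hpos hab
  have hcont : ContinuousOn (normalizedPrimitive w a b) (Icc a b) :=
    uIcc_of_le hab.le ▸ normalizedPrimitive.continuousOn hw
  rw [hcont.image_Icc_of_monotoneOn hab.le (normalizedPrimitive.strictMonoOn hw hpos).monotoneOn,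
    apply_left, apply_right htotal.ne']

theorem hasDerivAt_density_comp_rightInvOn (hw : IntervalIntegrable w volume a b)
    (hcont : ContinuousOn w (Ioo a b)) (hpos : ∀ r ∈ Ioo a b, 0 < w r)
    (hg : MapsTo g (Icc 0 1) (Icc a b))
    (hfg : RightInvOn g (normalizedPrimitive w a b) (Icc 0 1)) (hv : v ∈ Ioo 0 1)
    (hdiff : DifferentiableAt ℝ w (g v)) :
    HasDerivAt (fun u ↦ (∫ r in a..b, w r)⁻¹ * w (g u)) (logDeriv w (g v)) v := by
  have hmono := normalizedPrimitive.strictMonoOn hw hpos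
  have hgv : g v ∈ Ioo a b :=
    mapsTo_Ioo_of_strictMonoOn (strictMonoOn_of_rightInvOn hmono.monotoneOn hg hfg) hg hv
  have hab : a < b := hgv.1.trans hgv.2
  have htotal : (∫ r in a..b, w r)⁻¹ ≠ 0 :=
    inv_ne_zero (intervalIntegral.intervalIntegral_pos_of_pos_on hw hpos hab).ne'
  have hunit : Icc (0 : ℝ) 1 ∈ 𝓝 v := Icc_mem_nhds hv.1 hv.2
  have hgcont : ContinuousAt g v :=
    continuousAt_of_rightInvOn hmono (image_Icc hw hpos hab ▸ mapsTo_image _ _) hg hfg hunit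
      (Icc_mem_nhds hgv.1 hgv.2)
  rw [← logDeriv_const_mul (g v) _ htotal]
  exact hasDerivAt_deriv_comp_rightInverse hgcont (normalizedPrimitive.hasDerivAt hw hcont hgv)
    (hdiff.const_mul _) (mul_ne_zero htotal (hpos _ hgv).ne') (eventually_of_mem hunit hfg)

end normalizedPrimitive

/-- for `K > 0`, `N > 1`, `κ = K/(N-1)` and
`f(t) = c⁻¹ ∫₀^t sin_κ(r)^{N-1} dr` (`c` the normalizing constant), `f` is a continuous
strictly increasing bijection of `[0, π/√κ]` onto `[0,1]`; the model isoperimetric profile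
`h = f' ∘ f⁻¹` is differentiable on `(0,1)` with
`h'(v) = (N-1) cos_κ(f⁻¹ v) / sin_κ(f⁻¹ v)`, and `h'` is nonincreasing on `(0,1)`. -/
theorem model_isoperimetric_profile (K N : ℝ) (hK : 0 < K) (hN : 1 < N) :
    ∀ κ c : ℝ, κ = K / (N - 1) →
      c = ∫ r in (0:ℝ)..(Real.pi / Real.sqrt κ), sinK κ r ^ (N - 1) →
      ∀ f : ℝ → ℝ,
        (f = fun t => c⁻¹ * ∫ r in (0:ℝ)..t, sinK κ r ^ (N - 1)) →
        (ContinuousOn f (Set.Icc 0 (Real.pi / Real.sqrt κ)) ∧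
          StrictMonoOn f (Set.Icc 0 (Real.pi / Real.sqrt κ)) ∧
          f '' Set.Icc 0 (Real.pi / Real.sqrt κ) = Set.Icc 0 1) ∧
        -- for any inverse `g` of `f : [0, π/√κ] → [0,1]`, the profile
        -- `h = f' ∘ g`, with `f'(t) = c⁻¹ sin_κ(t)^{N-1}`, satisfies
        -- `h'(v) = (N-1) cos_κ(g v)/sin_κ(g v)` on `(0,1)`, and `h'` is nonincreasing:
        ∀ g : ℝ → ℝ,
          (∀ v ∈ Set.Icc (0:ℝ) 1, g v ∈ Set.Icc 0 (Real.pi / Real.sqrt κ) ∧ f (g v) = v) →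
          (∀ v ∈ Set.Ioo (0:ℝ) 1,
            HasDerivAt (fun w => c⁻¹ * sinK κ (g w) ^ (N - 1))
              ((N - 1) * cosK κ (g v) / sinK κ (g v)) v) ∧
          AntitoneOn (fun v => (N - 1) * cosK κ (g v) / sinK κ (g v)) (Set.Ioo 0 1) := by
  rintro κ c hκ rfl f rfl
  have hκ0 : 0 < κ := hκ ▸ div_pos hK (sub_pos.2 hN)
  have hp : 0 ≤ N - 1 := (sub_pos.2 hN).le
  have hT : 0 < π / √κ := div_pos pi_pos (sqrt_pos.2 hκ0)
  have hsin : ∀ r ∈ Ioo 0 (π / √κ), 0 < sinK κ r := fun _ hr ↦ sinK_pos hr.1 (.inr hr.2)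
  have hpos : ∀ r ∈ Ioo 0 (π / √κ), 0 < sinK κ r ^ (N - 1) := fun r hr ↦
    rpow_pos_of_pos (hsin r hr) _
  have hcont := continuous_sinK_rpow κ hp
  have hint := hcont.intervalIntegrable (μ := volume) 0 (π / √κ)
  have hmono := normalizedPrimitive.strictMonoOn hint hpos
  refine ⟨⟨uIcc_of_le hT.le ▸ normalizedPrimitive.continuousOn hint, hmono,
    normalizedPrimitive.image_Icc hint hpos hT⟩, fun g hg ↦ ?_⟩
  have hmaps : MapsTo g (Icc 0 1) (Icc 0 (π / √κ)) := fun v hv ↦ (hg v hv).1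
  have hinv : RightInvOn g (normalizedPrimitive _ 0 (π / √κ)) (Icc 0 1) := fun v hv ↦ (hg v hv).2
  have hgmono := strictMonoOn_of_rightInvOn hmono.monotoneOn hmaps hinv
  have hIoo : MapsTo g (Ioo 0 1) (Ioo 0 (π / √κ)) := mapsTo_Ioo_of_strictMonoOn hgmono hmaps
  refine ⟨fun v hv ↦ ?_, fun v hv w hw hvw ↦ antitoneOn_mul_cosK_div_sinK κ hp (hIoo hv) (hIoo hw)
    (hgmono.monotoneOn (Ioo_subset_Icc_self hv) (Ioo_subset_Icc_self hw) hvw)⟩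
  have hsinv := hsin _ (hIoo hv)
  rw [← logDeriv_sinK_rpow (N - 1) hsinv]
  exact normalizedPrimitive.hasDerivAt_density_comp_rightInvOn hint hcont.continuousOn hpos hmaps
    hinv hv (hasDerivAt_sinK_rpow (N - 1) hsinv.ne').differentiableAt
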